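/- Let D = (V,A) be a directed graph with nonnegative arc capacities x, and let T ⊆ V be nonempty. The polyhedron P_T = {x ∈ ℝ^A_{≥0} : x(δ^in(U)) ≥ 1 for all nonempty U ⊆ V \ T} has the property that every feasible point x dominates a convex combination of incidence vectors of T-rooted directed spanning forests; in particular, for any nonnegative arc costs c, Σ_a c(a)·x_a is at least the minimum cost of a T-rooted directed spanning forest. -/

import Mathlib

/-- `B` is a `T`-rooted directed spanning forest in the digraph `(V, A)`:
every non-terminal has in-degree exactly one, terminals have in-degree zero, and every
non-terminal is reachable from some terminal along the arcs of `B`.  (Each component is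
thus an arborescence oriented away from its unique root in `T`, and together they span `V`.) -/
def IsDirRootedForest {V : Type*} [Fintype V] [DecidableEq V]
    (A : Finset (V × V)) (T : Finset V) (B : Finset (V × V)) : Prop :=
  B ⊆ A ∧
  (∀ v : V, v ∉ T → (Finset.univ.filter (fun u => (u, v) ∈ B)).card = 1) ∧
  (∀ t ∈ T, ∀ u : V, (u, t) ∉ B) ∧
  (∀ v : V, v ∉ T → ∃ t ∈ T, Relation.ReflTransGen (fun a b => (a, b) ∈ B) t v)

/-- the arcs of `A` entering the vertex set `U` -/
def inArcs {V : Type*} [DecidableEq V] (A : Finset (V × V)) (U : Finset V) :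
    Finset (V × V) :=
  A.filter (fun a => a.1 ∉ U ∧ a.2 ∈ U)

/-!
The polyhedron `P_T` is the convex hull of the incidence vectors of forests plus the nonnegative
orthant as soon as each of its faces contains the incidence vector of a forest: moving from such a
vector through a point of the face until a new constraint becomes tight gives a smaller face.

So, given a feasible `x`, one needs a forest inside the support of `x` that enters every tight set
exactly once. It is grown from `T` one arc at a time, keeping the number of arcs entering each tight
set at most one. By submodularity of the cut function, tight sets that intersect uncross. Hence an
arc that leaves the vertices reached so far inside a minimal tight set containing both reached and
unreached vertices cannot be the second arc to enter a tight set.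
-/

section Polyhedron

variable {𝕜 E ι : Type*} [Field 𝕜] [LinearOrder 𝕜] [IsStrictOrderedRing 𝕜]
  [AddCommGroup E] [Module 𝕜 E] [Finite ι]

theorem exists_maximal_step {p q : ι → 𝕜} (hp : ∀ i, 0 ≤ p i) (hpq : ∀ i, p i = 0 → q i ≤ 0)
    (hlt : ∃ j, p j < q j) :
    ∃ ε : 𝕜, 0 ≤ ε ∧ ε < 1 ∧ (∀ i, ε * q i ≤ p i) ∧ ∃ i, 0 < p i ∧ ε * q i = p i := by
  obtain ⟨j, hj⟩ := hlt
  have hqj : 0 < q j := (hp j).trans_lt hj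
  obtain ⟨i, hqi : 0 < q i, hmin⟩ :=
    (Set.toFinite {i | 0 < q i}).exists_minimalFor (fun i => p i / q i) _ ⟨j, hqj⟩
  have hratio : ∀ l, 0 < q l → p i / q i ≤ p l / q l := fun l hl =>
    (le_total _ _).elim id (hmin hl)
  refine ⟨p i / q i, div_nonneg (hp i) hqi.le, (hratio j hqj).trans_lt ((div_lt_one hqj).2 hj),
    fun l => ?_, i, (hp i).lt_of_ne' fun h => (hpq i h).not_gt hqi, div_mul_cancel₀ _ hqi.ne'⟩
  rcases lt_or_ge 0 (q l) with hl | hl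
  · exact (le_div_iff₀ hl).1 (hratio l hl)
  · exact (mul_nonpos_of_nonneg_of_nonpos (div_nonneg (hp i) hqi.le) hl).trans (hp l)

theorem exists_mem_segment_slack_ssubset {f : ι → E →ₗ[𝕜] 𝕜} {b : ι → 𝕜} {s z : E}
    (hz : ∀ i, b i ≤ f i z) (htight : ∀ i, f i z = b i → f i s = b i)
    (hlt : ∃ i, f i z < f i s) :
    ∃ z', z ∈ segment 𝕜 s z' ∧ (∀ i, b i ≤ f i z') ∧ {i | b i < f i z'} ⊂ {i | b i < f i z} := by
  obtain ⟨ε, hε0, hε1, hstep, j, hj, hjε⟩ : ∃ ε : 𝕜, 0 ≤ ε ∧ ε < 1 ∧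
      (∀ i, ε * (f i s - b i) ≤ f i z - b i) ∧
      ∃ i, 0 < f i z - b i ∧ ε * (f i s - b i) = f i z - b i :=
    exists_maximal_step (fun i => sub_nonneg.2 (hz i))
      (fun i hi => (sub_eq_zero.2 (htight i (sub_eq_zero.1 hi))).le)
      (hlt.imp fun i hi => sub_lt_sub_right hi _)
  have hε : 0 < 1 - ε := sub_pos.2 hε1
  obtain ⟨z', hz'⟩ : ∃ z', ε • s + (1 - ε) • z' = z :=
    ⟨(1 - ε)⁻¹ • (z - ε • s), by rw [smul_inv_smul₀ hε.ne', add_sub_cancel]⟩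
  have hgap : ∀ i, (1 - ε) * (f i z' - b i) = f i z - b i - ε * (f i s - b i) := fun i => by
    simp only [← hz', map_add, map_smul, smul_eq_mul]
    ring
  refine ⟨z', ⟨ε, 1 - ε, hε0, hε.le, add_sub_cancel _ _, hz'⟩, fun i => ?_,
    Set.ssubset_iff_exists.2 ⟨fun i (hi : b i < f i z') => ?_, j, sub_pos.1 hj, ?_⟩⟩
  · exact sub_nonneg.1 (nonneg_of_mul_nonneg_right (hgap i ▸ sub_nonneg.2 (hstep i)) hε)
  · refine (hz i).lt_of_ne' fun h => (mul_pos hε (sub_pos.2 hi)).ne' ?_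
    rw [hgap, h, htight i h, sub_self, mul_zero, sub_zero]
  · refine fun hjz' : b j < f j z' => (mul_pos hε (sub_pos.2 hjz')).ne' ?_
    rw [hgap, hjε, sub_self]

theorem exists_mem_convexHull_forall_le {f : ι → E →ₗ[𝕜] 𝕜} {b : ι → 𝕜} {S : Set E}
    (hface : ∀ z, (∀ i, b i ≤ f i z) → ∃ s ∈ S, ∀ i, f i z = b i → f i s = b i)
    {z : E} (hz : ∀ i, b i ≤ f i z) :
    ∃ y ∈ convexHull 𝕜 S, ∀ i, f i y ≤ f i z := by
  induction hslack : {i | b i < f i z} using WellFoundedLT.induction generalizing z with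
  | ind slack ih =>
  obtain ⟨s, hs, htight⟩ := hface z hz
  by_cases hsz : ∀ i, f i s ≤ f i z
  · exact ⟨s, subset_convexHull 𝕜 S hs, hsz⟩
  push Not at hsz
  obtain ⟨z', ⟨ε, δ, hε, hδ, hεδ, rfl⟩, hz', hssub⟩ :=
    exists_mem_segment_slack_ssubset hz htight hsz
  obtain ⟨y, hy, hyz⟩ := ih _ (hslack ▸ hssub) hz' rfl
  refine ⟨ε • s + δ • y, convex_convexHull 𝕜 S (subset_convexHull 𝕜 S hs) hy hε hδ hεδ,
    fun i => ?_⟩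
  simp only [map_add, map_smul, smul_eq_mul]
  gcongr
  exact hyz i

end Polyhedron

section Cuts

variable {V : Type*} [DecidableEq V] {A : Finset (V × V)} {U : Finset V}

theorem mem_inArcs {a : V × V} : a ∈ inArcs A U ↔ a ∈ A ∧ a.1 ∉ U ∧ a.2 ∈ U :=
  Finset.mem_filter

theorem inArcs_nonempty_of_reflTransGen {t v : V}
    (h : Relation.ReflTransGen (fun a b => (a, b) ∈ A) t v) (ht : t ∉ U) (hv : v ∈ U) :
    (inArcs A U).Nonempty := by
  induction h with
  | refl => exact absurd hv ht
  | @tail b c _ hbc ih =>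
    by_cases hb : b ∈ U
    · exact ih hb
    · exact ⟨(b, c), mem_inArcs.2 ⟨hbc, hb, hv⟩⟩

/-- The arcs of `A` between `U \ W` and `W \ U`, in either direction: the defect in the
submodularity of the cut function at `U` and `W`. -/
def crossArcs (A : Finset (V × V)) (U W : Finset V) : Finset (V × V) :=
  {a ∈ A | a.1 ∈ U \ W ∧ a.2 ∈ W \ U ∨ a.1 ∈ W \ U ∧ a.2 ∈ U \ W}

theorem sum_inArcs_add_sum_inArcs {M : Type*} [AddCommMonoid M] (A : Finset (V × V))
    (U W : Finset V) (x : V × V → M) :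
    ∑ a ∈ inArcs A U, x a + ∑ a ∈ inArcs A W, x a =
      ∑ a ∈ inArcs A (U ∩ W), x a + ∑ a ∈ inArcs A (U ∪ W), x a + ∑ a ∈ crossArcs A U W, x a := by
  simp only [inArcs, crossArcs, Finset.sum_filter, ← Finset.sum_add_distrib]
  refine Finset.sum_congr rfl fun a _ => ?_
  by_cases a.1 ∈ U <;> by_cases a.1 ∈ W <;> by_cases a.2 ∈ U <;> by_cases a.2 ∈ W <;> simp [*]

end Cuts

section TightCuts

variable {V 𝕜 : Type*} [DecidableEq V] [CommRing 𝕜] [LinearOrder 𝕜] [IsStrictOrderedRing 𝕜]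
  {A : Finset (V × V)} {T U W : Finset V} {x : V × V → 𝕜}

/-- The cut constraints of the polyhedron `P_T`; nonnegativity of `x` is not part of them. -/
def SatisfiesCuts (A : Finset (V × V)) (T : Finset V) (x : V × V → 𝕜) : Prop :=
  ∀ U : Finset V, U.Nonempty → Disjoint U T → 1 ≤ ∑ a ∈ inArcs A U, x a

/-- A vertex set whose cut constraint in `P_T` holds with equality at `x`. -/
structure IsTight (A : Finset (V × V)) (T : Finset V) (x : V × V → 𝕜) (U : Finset V) : Prop where
  nonempty : U.Nonempty
  disjoint : Disjoint U T
  sum_eq : ∑ a ∈ inArcs A U, x a = 1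

theorem IsTight.uncross (hU : IsTight A T x U) (hW : IsTight A T x W) (hUW : (U ∩ W).Nonempty)
    (hx : ∀ a ∈ A, 0 < x a) (hcut : SatisfiesCuts A T x) :
    IsTight A T x (U ∩ W) ∧ IsTight A T x (U ∪ W) ∧ crossArcs A U W = ∅ := by
  have hinter : Disjoint (U ∩ W) T := hU.disjoint.mono_left Finset.inter_subset_left
  have hunion : Disjoint (U ∪ W) T := Finset.disjoint_union_left.2 ⟨hU.disjoint, hW.disjoint⟩
  have hsum := sum_inArcs_add_sum_inArcs A U W x
  rw [hU.sum_eq, hW.sum_eq] at hsum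
  have hinter_le := hcut _ hUW hinter
  have hunion_le := hcut _ (hU.nonempty.mono Finset.subset_union_left) hunion
  have hcross : crossArcs A U W = ∅ := by
    by_contra hne
    have : 0 < ∑ a ∈ crossArcs A U W, x a :=
      Finset.sum_pos (fun a ha => hx a (Finset.mem_filter.1 ha).1)
        (Finset.nonempty_iff_ne_empty.2 hne)
    linarith
  rw [hcross, Finset.sum_empty] at hsum
  exact ⟨⟨hUW, hinter, by linarith⟩,
    ⟨hU.nonempty.mono Finset.subset_union_left, hunion, by linarith⟩, hcross⟩

end TightCuts

/-- `B` is the arc set of a forest in `A` rooted at `T` that spans the vertex set `R`, presented by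
an order in which its arcs can be added, each one reaching a new vertex. -/
inductive IsBranching {V : Type*} [DecidableEq V] (A : Finset (V × V)) (T : Finset V) :
    Finset V → Finset (V × V) → Prop
  | roots : IsBranching A T T ∅
  | grow {R : Finset V} {B : Finset (V × V)} {u v : V} (hB : IsBranching A T R B)
      (huv : (u, v) ∈ A) (hu : u ∈ R) (hv : v ∉ R) :
      IsBranching A T (insert v R) (insert (u, v) B)

namespace IsBranching

variable {V : Type*} [DecidableEq V] {A B : Finset (V × V)} {T R U : Finset V}

theorem subset (hB : IsBranching A T R B) : B ⊆ A := by
  induction hB with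
  | roots => exact Finset.empty_subset A
  | grow _ huv _ _ ih => exact Finset.insert_subset huv ih

theorem roots_subset (hB : IsBranching A T R B) : T ⊆ R := by
  induction hB with
  | roots => exact subset_rfl
  | grow _ _ _ _ ih => exact ih.trans (Finset.subset_insert _ _)

theorem head_mem (hB : IsBranching A T R B) {a : V × V} (ha : a ∈ B) : a.2 ∈ R := by
  induction hB with
  | roots => simp at ha
  | grow _ _ _ _ ih =>
    rcases Finset.mem_insert.1 ha with rfl | ha
    · exact Finset.mem_insert_self _ _
    · exact Finset.mem_insert_of_mem (ih ha)

theorem head_notMem_roots (hB : IsBranching A T R B) {a : V × V} (ha : a ∈ B) : a.2 ∉ T := by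
  induction hB with
  | roots => simp at ha
  | grow hB _ _ hv ih =>
    rcases Finset.mem_insert.1 ha with rfl | ha
    · exact fun hT => hv (hB.roots_subset hT)
    · exact ih ha

theorem existsUnique_arc (hB : IsBranching A T R B) {w : V} (hw : w ∈ R) (hwT : w ∉ T) :
    ∃! u, (u, w) ∈ B := by
  induction hB with
  | roots => exact absurd hw hwT
  | @grow R B u v hB _ _ hv ih =>
    by_cases hwv : w = v
    · subst hwv
      have : ∀ y, (y, w) ∉ B := fun y hy => hv (hB.head_mem hy)
      simp [this]
    · simpa [hwv] using ih (Finset.mem_of_mem_insert_of_ne hw hwv)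

theorem exists_reflTransGen (hB : IsBranching A T R B) {w : V} (hw : w ∈ R) :
    ∃ t ∈ T, Relation.ReflTransGen (fun a b => (a, b) ∈ B) t w := by
  induction hB generalizing w with
  | roots => exact ⟨w, hw, .refl⟩
  | @grow R B u v _ _ hu _ ih =>
    have hmono : ∀ {s t}, Relation.ReflTransGen (fun a b => (a, b) ∈ B) s t →
        Relation.ReflTransGen (fun a b => (a, b) ∈ insert (u, v) B) s t := fun h =>
      Relation.ReflTransGen.mono (fun _ _ => Finset.mem_insert_of_mem) _ _ h
    rcases Finset.mem_insert.1 hw with rfl | hw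
    · obtain ⟨t, ht, htu⟩ := ih hu
      exact ⟨t, ht, (hmono htu).tail (Finset.mem_insert_self _ _)⟩
    · obtain ⟨t, ht, htw⟩ := ih hw
      exact ⟨t, ht, hmono htw⟩

theorem inArcs_nonempty (hB : IsBranching A T R B) (hUT : Disjoint U T) (hUR : ¬Disjoint U R) :
    (inArcs B U).Nonempty := by
  obtain ⟨v, hvU, hvR⟩ := Finset.not_disjoint_iff.1 hUR
  obtain ⟨t, ht, htv⟩ := hB.exists_reflTransGen hvR
  exact inArcs_nonempty_of_reflTransGen htv (Finset.disjoint_right.1 hUT ht) hvU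

theorem isDirRootedForest [Fintype V] (hB : IsBranching A T Finset.univ B) :
    IsDirRootedForest A T B :=
  ⟨hB.subset,
    fun v hv =>
      (Fintype.existsUnique_iff_card_one _).1 (hB.existsUnique_arc (Finset.mem_univ v) hv),
    fun _ ht _ hut => hB.head_notMem_roots hut ht,
    fun v _ => hB.exists_reflTransGen (Finset.mem_univ v)⟩

end IsBranching

section TightForest

variable {V 𝕜 : Type*} [DecidableEq V] [CommRing 𝕜] [LinearOrder 𝕜] [IsStrictOrderedRing 𝕜]
  {A B : Finset (V × V)} {T R U W : Finset V} {x : V × V → 𝕜}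

theorem SatisfiesCuts.inArcs_nonempty (hcut : SatisfiesCuts A T x) (hU : U.Nonempty)
    (hUT : Disjoint U T) : (inArcs A U).Nonempty := by
  refine Finset.nonempty_of_sum_ne_zero (f := x) ?_
  exact (zero_lt_one.trans_le (hcut U hU hUT)).ne'

theorem IsTight.exists_arc_of_isBranching (hU : IsTight A T x U) (hB : IsBranching A T R B)
    (hx : ∀ a ∈ A, 0 < x a) (hcut : SatisfiesCuts A T x) (hUR : ¬Disjoint U R) (hR : ¬U ⊆ R) :
    ∃ a ∈ A, a.1 ∈ U ∩ R ∧ a.2 ∈ U \ R := by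
  by_contra! hnone
  have hsub : inArcs A (U \ R) ⊆ inArcs A U := fun a ha => by
    have := hnone a
    simp only [mem_inArcs, Finset.mem_inter, Finset.mem_sdiff] at ha this ⊢
    tauto
  obtain ⟨e, he⟩ := hB.inArcs_nonempty hU.disjoint hUR
  obtain ⟨heB, he1, he2⟩ := mem_inArcs.1 he
  have hlt : ∑ a ∈ inArcs A (U \ R), x a < ∑ a ∈ inArcs A U, x a :=
    Finset.sum_lt_sum_of_subset hsub (i := e) (mem_inArcs.2 ⟨hB.subset heB, he1, he2⟩)
      (fun h => (Finset.mem_sdiff.1 (mem_inArcs.1 h).2.2).2 (hB.head_mem heB))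
      (hx e (hB.subset heB)) (fun a ha _ => (hx a (mem_inArcs.1 ha).1).le)
  exact (hcut (U \ R) (Finset.sdiff_nonempty.2 hR)
    (hU.disjoint.mono_left Finset.sdiff_subset)).not_gt (hU.sum_eq ▸ hlt)

-- Otherwise the arcs of `B` entering `U` and `W` are distinct and both enter the tight set `U ∪ W`.
theorem IsBranching.not_disjoint_inter (hB : IsBranching A T R B)
    (hone : ∀ U, IsTight A T x U → (inArcs B U).card ≤ 1)
    (hx : ∀ a ∈ A, 0 < x a) (hcut : SatisfiesCuts A T x)
    (hU : IsTight A T x U) (hW : IsTight A T x W) (hUW : (U ∩ W).Nonempty)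
    (hUR : ¬Disjoint U R) (hWR : ¬Disjoint W R) : ¬Disjoint (U ∩ W) R := by
  intro hdisj
  obtain ⟨-, hunion, hcross⟩ := hU.uncross hW hUW hx hcut
  obtain ⟨d, hd⟩ := hB.inArcs_nonempty hU.disjoint hUR
  obtain ⟨e, he⟩ := hB.inArcs_nonempty hW.disjoint hWR
  obtain ⟨hdB, hd1, hd2⟩ := mem_inArcs.1 hd
  obtain ⟨heB, he1, he2⟩ := mem_inArcs.1 he
  have hdW : d.2 ∉ W := fun h =>
    Finset.disjoint_left.1 hdisj (Finset.mem_inter.2 ⟨hd2, h⟩) (hB.head_mem hdB)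
  have heU : e.2 ∉ U := fun h =>
    Finset.disjoint_left.1 hdisj (Finset.mem_inter.2 ⟨h, he2⟩) (hB.head_mem heB)
  have henter : ∀ a ∈ B, a.1 ∉ U ∧ a.2 ∈ U \ W ∨ a.1 ∉ W ∧ a.2 ∈ W \ U →
      a ∈ inArcs B (U ∪ W) := fun a haB ha => by
    have haA := hB.subset haB
    have hnocross : a ∉ crossArcs A U W := hcross ▸ Finset.notMem_empty a
    simp only [crossArcs, mem_inArcs, Finset.mem_filter, Finset.mem_sdiff, Finset.mem_union]
      at ha hnocross ⊢
    tauto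
  have hde : d = e := Finset.card_le_one.1 (hone _ hunion)
    d (henter d hdB (.inl ⟨hd1, Finset.mem_sdiff.2 ⟨hd2, hdW⟩⟩))
    e (henter e heB (.inr ⟨he1, Finset.mem_sdiff.2 ⟨he2, heU⟩⟩))
  exact hdW (hde ▸ he2)

variable [Fintype V]

theorem IsBranching.exists_safe_arc (hB : IsBranching A T R B)
    (hone : ∀ U, IsTight A T x U → (inArcs B U).card ≤ 1)
    (hx : ∀ a ∈ A, 0 < x a) (hcut : SatisfiesCuts A T x) (hR : R ≠ Finset.univ) :
    ∃ u ∈ R, ∃ v ∉ R, (u, v) ∈ A ∧ ∀ W, IsTight A T x W → u ∉ W → v ∈ W → Disjoint W R := by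
  by_cases hsplit : ∃ U, IsTight A T x U ∧ ¬Disjoint U R ∧ ¬U ⊆ R
  · obtain ⟨U, ⟨hU, hUR, hUR'⟩, hmin⟩ := exists_minimal_of_wellFoundedLT _ hsplit
    obtain ⟨⟨u, v⟩, huv, hu, hv⟩ := hU.exists_arc_of_isBranching hB hx hcut hUR hUR'
    obtain ⟨huU, huR⟩ := Finset.mem_inter.1 hu
    obtain ⟨hvU, hvR⟩ := Finset.mem_sdiff.1 hv
    refine ⟨u, huR, v, hvR, huv, fun W hW huW hvW => by_contra fun hWR => huW ?_⟩
    have hvUW : v ∈ U ∩ W := Finset.mem_inter.2 ⟨hvU, hvW⟩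
    have hUW : U ≤ U ∩ W := hmin ⟨(hU.uncross hW ⟨v, hvUW⟩ hx hcut).1,
      hB.not_disjoint_inter hone hx hcut hU hW ⟨v, hvUW⟩ hUR hWR, fun h => hvR (h hvUW)⟩
      Finset.inter_subset_left
    exact (Finset.mem_inter.1 (hUW huU)).2
  · obtain ⟨⟨u, v⟩, huv⟩ := hcut.inArcs_nonempty (Finset.nonempty_iff_ne_empty.2
      ((Finset.compl_eq_empty_iff R).not.2 hR))
      (Finset.disjoint_left.2 fun v hv hvT => Finset.mem_compl.1 hv (hB.roots_subset hvT))
    obtain ⟨huvA, hu, hv⟩ := mem_inArcs.1 huv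
    rw [Finset.mem_compl] at hu hv
    refine ⟨u, not_not.1 hu, v, hv, huvA, fun W hW _ hvW => ?_⟩
    by_contra hWR
    exact hsplit ⟨W, hW, hWR, fun h => hv (h hvW)⟩

theorem exists_isBranching_univ (hx : ∀ a ∈ A, 0 < x a) (hcut : SatisfiesCuts A T x) :
    ∃ B, IsBranching A T Finset.univ B ∧ ∀ U, IsTight A T x U → (inArcs B U).card ≤ 1 := by
  obtain ⟨R, ⟨B, hB, hone⟩, hmax⟩ := exists_maximal_of_wellFoundedGT
    (fun R => ∃ B, IsBranching A T R B ∧ ∀ U, IsTight A T x U → (inArcs B U).card ≤ 1)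
    ⟨T, ∅, .roots, by simp [inArcs]⟩
  by_cases hR : R = Finset.univ
  · exact ⟨B, hR ▸ hB, hone⟩
  obtain ⟨u, hu, v, hv, huv, hsafe⟩ := hB.exists_safe_arc hone hx hcut hR
  refine absurd (hmax ⟨_, hB.grow huv hu hv, fun U hU => ?_⟩ (Finset.subset_insert v R)
    (Finset.mem_insert_self v R)) hv
  by_cases henter : u ∉ U ∧ v ∈ U
  · have hempty : inArcs B U = ∅ := Finset.filter_eq_empty_iff.2 fun a ha haU =>
      Finset.disjoint_left.1 (hsafe U hU henter.1 henter.2) haU.2 (hB.head_mem ha)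
    rw [inArcs, Finset.filter_insert, if_pos henter, ← inArcs, hempty]
    simp
  · rw [inArcs, Finset.filter_insert, if_neg henter]
    exact hone U hU

theorem exists_isDirRootedForest_forall_isTight (hx : ∀ a ∈ A, 0 ≤ x a)
    (hcut : SatisfiesCuts A T x) :
    ∃ B, IsDirRootedForest A T B ∧ (∀ a ∈ B, 0 < x a) ∧
      ∀ U, IsTight A T x U → (inArcs B U).card = 1 := by
  let A' := {a ∈ A | 0 < x a}
  have hsum : ∀ U, ∑ a ∈ inArcs A' U, x a = ∑ a ∈ inArcs A U, x a := fun U => by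
    refine Finset.sum_subset (Finset.filter_subset_filter _ (Finset.filter_subset _ A)) ?_
    intro a haU haU'
    simp only [A', mem_inArcs, Finset.mem_filter] at haU haU'
    refine (hx a haU.1).antisymm' (not_lt.1 fun h => haU' ⟨⟨haU.1, h⟩, haU.2⟩)
  obtain ⟨B, hB, hone⟩ := exists_isBranching_univ (A := A') (T := T) (x := x)
    (fun a ha => (Finset.mem_filter.1 ha).2) fun U hU hUT => (hsum U).symm ▸ hcut U hU hUT
  have hforest := hB.isDirRootedForest
  refine ⟨B, ⟨hforest.1.trans (Finset.filter_subset _ A), hforest.2⟩,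
    fun a ha => (Finset.mem_filter.1 (hB.subset ha)).2, fun U hU => ?_⟩
  refine (hone U ⟨hU.nonempty, hU.disjoint, (hsum U).trans hU.sum_eq⟩).antisymm ?_
  obtain ⟨v, hv⟩ := hU.nonempty
  exact (hB.inArcs_nonempty hU.disjoint
    (Finset.not_disjoint_iff.2 ⟨v, hv, Finset.mem_univ v⟩)).card_pos

end TightForest

section Incidence

variable {α 𝕜 : Type*} [DecidableEq α]

/-- The incidence vector of a finite set. -/
def incidence (𝕜 : Type*) [Zero 𝕜] [One 𝕜] (B : Finset α) (a : α) : 𝕜 :=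
  if a ∈ B then 1 else 0

theorem sum_mul_incidence [NonAssocSemiring 𝕜] {A B : Finset α} (hBA : B ⊆ A) (c : α → 𝕜) :
    ∑ a ∈ A, c a * incidence 𝕜 B a = ∑ a ∈ B, c a := by
  simp only [incidence, mul_ite, mul_one, mul_zero, Finset.sum_ite_mem]
  rw [Finset.inter_eq_right.2 hBA]

theorem sum_inArcs_incidence {V : Type*} [DecidableEq V] [NonAssocSemiring 𝕜]
    {A B : Finset (V × V)} (hBA : B ⊆ A) (U : Finset V) :
    ∑ a ∈ inArcs A U, incidence 𝕜 B a = (inArcs B U).card := by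
  simp only [incidence, Finset.sum_boole, inArcs, Finset.filter_filter]
  congr 2
  ext a
  simp only [Finset.mem_filter]
  exact ⟨fun h => ⟨h.2.2, h.2.1⟩, fun h => ⟨hBA h.1, h.2, h.1⟩⟩

theorem exists_fin_of_mem_convexHull_incidence [Field 𝕜] [LinearOrder 𝕜]
    [IsStrictOrderedRing 𝕜] {S : Set (Finset α)} {y : α → 𝕜}
    (hy : y ∈ convexHull 𝕜 (incidence 𝕜 '' S)) :
    ∃ (n : ℕ) (lam : Fin n → 𝕜) (B : Fin n → Finset α),
      (∀ i, 0 ≤ lam i) ∧ ∑ i, lam i = 1 ∧ (∀ i, B i ∈ S) ∧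
      ∀ a, ∑ i with a ∈ B i, lam i = y a := by
  obtain ⟨ι, _, w, z, hw0, hw1, hz, rfl⟩ := mem_convexHull_iff_exists_fintype.1 hy
  choose B hBS hBz using hz
  let e := (Fintype.equivFin ι).symm
  refine ⟨_, w ∘ e, B ∘ e, fun i => hw0 (e i), (e.sum_comp w).trans hw1, fun i => hBS (e i),
    fun a => ?_⟩
  rw [Finset.sum_apply, ← e.sum_comp, Finset.sum_filter]
  simp [← hBz, incidence]

theorem exists_sum_le_of_mem_convexHull_incidence [Field 𝕜] [LinearOrder 𝕜]
    [IsStrictOrderedRing 𝕜] {A : Finset α} {S : Set (Finset α)} (hS : ∀ B ∈ S, B ⊆ A) {y : α → 𝕜}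
    (hy : y ∈ convexHull 𝕜 (incidence 𝕜 '' S)) (c : α → 𝕜) :
    ∃ B ∈ S, ∑ a ∈ B, c a ≤ ∑ a ∈ A, c a * y a := by
  let cost : (α → 𝕜) →ₗ[𝕜] 𝕜 := ∑ a ∈ A, c a • LinearMap.proj a
  have hcost : ∀ z, cost z = ∑ a ∈ A, c a * z a := fun z => by simp [cost]
  obtain ⟨_, ⟨B, hB, rfl⟩, hle⟩ :=
    (cost.concaveOn convex_univ).exists_le_of_mem_convexHull (Set.subset_univ _) hy
  rw [hcost, hcost, sum_mul_incidence (hS B hB)] at hle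
  exact ⟨B, hB, hle⟩

end Incidence

section Domination

variable {V 𝕜 : Type*} [Fintype V] [DecidableEq V] [Field 𝕜] [LinearOrder 𝕜]
  [IsStrictOrderedRing 𝕜] {A : Finset (V × V)} {T : Finset V} {x : V × V → 𝕜}

theorem exists_mem_convexHull_incidence_le (hx : ∀ a, 0 ≤ x a) (hcut : SatisfiesCuts A T x) :
    ∃ y ∈ convexHull 𝕜 (incidence 𝕜 '' {B | IsDirRootedForest A T B}), y ≤ x := by
  let f : (V × V) ⊕ {U : Finset V // U.Nonempty ∧ Disjoint U T} → (V × V → 𝕜) →ₗ[𝕜] 𝕜 :=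
    Sum.elim LinearMap.proj fun U => ∑ a ∈ inArcs A U, LinearMap.proj a
  let b : (V × V) ⊕ {U : Finset V // U.Nonempty ∧ Disjoint U T} → 𝕜 :=
    Sum.elim (fun _ => 0) fun _ => 1
  have hfeasible : ∀ z, (∀ i, b i ≤ f i z) ↔ (∀ a, 0 ≤ z a) ∧ SatisfiesCuts A T z := fun z => by
    simp [f, b, SatisfiesCuts, Sum.forall]
  have hface : ∀ z, (∀ i, b i ≤ f i z) →
      ∃ s ∈ incidence 𝕜 '' {B | IsDirRootedForest A T B}, ∀ i, f i z = b i → f i s = b i := by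
    intro z hz
    obtain ⟨hz0, hzcut⟩ := (hfeasible z).1 hz
    obtain ⟨B, hB, hpos, hone⟩ := exists_isDirRootedForest_forall_isTight (fun a _ => hz0 a) hzcut
    refine ⟨incidence 𝕜 B, ⟨B, hB, rfl⟩, ?_⟩
    rintro (a | ⟨U, hU, hUT⟩) htight
    · exact if_neg fun ha => (hpos a ha).ne' htight
    · have hUtight : IsTight A T z U := ⟨hU, hUT, by simpa [f, b] using htight⟩
      simpa [f, b, hone U hUtight] using sum_inArcs_incidence (𝕜 := 𝕜) hB.1 U
  obtain ⟨y, hy, hyx⟩ := exists_mem_convexHull_forall_le hface ((hfeasible x).2 ⟨hx, hcut⟩)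
  exact ⟨y, hy, fun a => hyx (Sum.inl a)⟩

end Domination

theorem stmt_15_general {V 𝕜 : Type*} [Fintype V] [DecidableEq V]
    [Field 𝕜] [LinearOrder 𝕜] [IsStrictOrderedRing 𝕜]
    (A : Finset (V × V)) (T : Finset V) (x : V × V → 𝕜) (hx0 : ∀ a, 0 ≤ x a)
    (hcut : ∀ U : Finset V, U.Nonempty → (∀ v ∈ U, v ∉ T) → 1 ≤ ∑ a ∈ inArcs A U, x a) :
    (∃ (n : ℕ) (lam : Fin n → 𝕜) (B : Fin n → Finset (V × V)),
      (∀ i, 0 ≤ lam i) ∧ (∑ i, lam i) = 1 ∧ (∀ i, IsDirRootedForest A T (B i)) ∧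
      ∀ a : V × V, (∑ i ∈ Finset.univ.filter (fun i => a ∈ B i), lam i) ≤ x a) ∧
    (∀ c : V × V → 𝕜, (∀ a, 0 ≤ c a) →
      ∃ B : Finset (V × V), IsDirRootedForest A T B ∧
        ∑ a ∈ B, c a ≤ ∑ a ∈ A, c a * x a) := by
  obtain ⟨y, hy, hyx⟩ := exists_mem_convexHull_incidence_le hx0 fun U hU hUT =>
    hcut U hU fun _ hv => Finset.disjoint_left.1 hUT hv
  constructor
  · obtain ⟨n, lam, B, hlam0, hlam1, hB, hlamB⟩ := exists_fin_of_mem_convexHull_incidence hy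
    exact ⟨n, lam, B, hlam0, hlam1, hB, fun a => (hlamB a).trans_le (hyx a)⟩
  · intro c hc
    obtain ⟨B, hB, hle⟩ := exists_sum_le_of_mem_convexHull_incidence (fun _ hB => hB.1) hy c
    exact ⟨B, hB, hle.trans <|
      Finset.sum_le_sum fun a _ => mul_le_mul_of_nonneg_left (hyx a) (hc a)⟩

theorem stmt_15 {V : Type*} [Fintype V] [DecidableEq V]
    (A : Finset (V × V)) (hA : ∀ a ∈ A, a.1 ≠ a.2)
    (T : Finset V) (hT : T.Nonempty)
    -- x is a feasible point of the polyhedron P_T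
    (x : V × V → ℚ) (hx0 : ∀ a, 0 ≤ x a) (hxsupp : ∀ a ∉ A, x a = 0)
    (hcut : ∀ U : Finset V, U.Nonempty → (∀ v ∈ U, v ∉ T) → 1 ≤ ∑ a ∈ inArcs A U, x a) :
    -- x dominates a convex combination of T-rooted directed spanning forests ...
    (∃ (n : ℕ) (lam : Fin n → ℚ) (B : Fin n → Finset (V × V)),
      (∀ i, 0 ≤ lam i) ∧ (∑ i, lam i) = 1 ∧ (∀ i, IsDirRootedForest A T (B i)) ∧
      ∀ a : V × V, (∑ i ∈ Finset.univ.filter (fun i => a ∈ B i), lam i) ≤ x a) ∧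
    (∀ c : V × V → ℚ, (∀ a, 0 ≤ c a) →
      ∃ B : Finset (V × V), IsDirRootedForest A T B ∧
        ∑ a ∈ B, c a ≤ ∑ a ∈ A, c a * x a) :=
  stmt_15_general A T x hx0 hcut
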